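/- arXiv:1908.06659 — 3 statements merged into one kernel-verified Lean document; each statement's English description precedes it below -/
import Mathlib

section
/- Let S ⊆ A be a coalition such that ∑_{n∈S} λ_n(f) > 0 for every f ∈ F, and define η_a(f) = λ_a(f) / ∑_{n∈S} λ_n(f) and Φ_a(C, S) = ∑_{f∈C} (b·λ_a(f) − s·η_a(f)). Then for every choice of subsidy fractions r : A → ℝ with r_a ≥ 0, the subsidy sub(C, S) = ∑_{a∈S} r_a·Φ_a(C, S) is maximized over all C ⊆ F at C = C*(S); in particular the maximizing set C*(S) is independent of the fractions r (neutrality). -/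
/-!
The term of `f` in `Φ_a(C, S)` factors as `η_a(f) * (b * ∑ n ∈ S, λ_n(f) - s)`: each ANO receives
a nonnegative share of the saving made by caching `f`. Hence every ANO agrees on which contents
are worth caching, so `C*(S)` maximizes each `Φ_a` separately and therefore every combination of
them with nonnegative weights.
-/

namespace Caching

theorem sum_le_sum_of_sdiff {ι M : Type*} [DecidableEq ι] [AddCommMonoid M] [PartialOrder M]
    [IsOrderedCancelAddMonoid M] {g : ι → M} {s t : Finset ι}
    (hst : ∀ i ∈ s \ t, g i ≤ 0) (hts : ∀ i ∈ t \ s, 0 ≤ g i) :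
    ∑ i ∈ s, g i ≤ ∑ i ∈ t, g i :=
  Finset.sum_sdiff_le_sum_sdiff.mp ((Finset.sum_nonpos hst).trans (Finset.sum_nonneg hts))

variable {A F K : Type*} [Field K]

/-- The share `η_a(f)` of ANO `a` in the demand of the coalition `S` for the content `f`
(the junk value `0` when that total demand vanishes). -/
def demandShare (lam : A → F → K) (S : Finset A) (a : A) (f : F) : K :=
  lam a f / ∑ n ∈ S, lam n f

/-- The part `Φ_a(C, S)` of the caching saving that accrues to ANO `a` when the coalition `S` caches
`C` and splits the storage cost of each content in proportion to demand. -/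
def individualSaving (b s : K) (lam : A → F → K) (S : Finset A) (a : A) (C : Finset F) : K :=
  ∑ f ∈ C, (b * lam a f - s * demandShare lam S a f)

/-- The optimal content set `C*(S)`, relative to a finite catalogue `U` of available contents. -/
def optimalContents [LinearOrder K] (b s : K) (lam : A → F → K) (S : Finset A) (U : Finset F) :
    Finset F :=
  U.filter (fun f => s / b < ∑ n ∈ S, lam n f)

theorem bandwidth_sub_storage_eq_demandShare_mul {lam : A → F → K} {S : Finset A} {f : F}
    (hS : ∑ n ∈ S, lam n f ≠ 0) (b s : K) (a : A) :
    b * lam a f - s * demandShare lam S a f =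
      demandShare lam S a f * (b * ∑ n ∈ S, lam n f - s) := by
  have h_share : demandShare lam S a f * ∑ n ∈ S, lam n f = lam a f := div_mul_cancel₀ _ hS
  linear_combination -b * h_share

variable [LinearOrder K] [IsStrictOrderedRing K]

theorem individualSaving_le_optimalContents {b s : K} {lam : A → F → K} {S : Finset A} {a : A}
    {U C : Finset F} (hb : 0 < b) (hlam : ∀ f ∈ U, 0 ≤ lam a f)
    (hS : ∀ f ∈ U, 0 < ∑ n ∈ S, lam n f) (hC : C ⊆ U) :
    individualSaving b s lam S a C ≤
      individualSaving b s lam S a (optimalContents b s lam S U) := by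
  classical
  have share_nonneg : ∀ f ∈ U, 0 ≤ demandShare lam S a f := fun f hf =>
    div_nonneg (hlam f hf) (hS f hf).le
  refine sum_le_sum_of_sdiff (fun f hf => ?_) (fun f hf => ?_)
  · obtain ⟨hfC, hf_not_opt⟩ := Finset.mem_sdiff.mp hf
    have hfU : f ∈ U := hC hfC
    have demand_le : ∑ n ∈ S, lam n f ≤ s / b :=
      not_lt.mp fun h => hf_not_opt (Finset.mem_filter.mpr ⟨hfU, h⟩)
    rw [bandwidth_sub_storage_eq_demandShare_mul (hS f hfU).ne']
    exact mul_nonpos_of_nonneg_of_nonpos (share_nonneg f hfU)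
      (sub_nonpos.mpr ((le_div_iff₀' hb).mp demand_le))
  · obtain ⟨hfU, lt_demand⟩ := Finset.mem_filter.mp (Finset.mem_sdiff.mp hf).1
    rw [bandwidth_sub_storage_eq_demandShare_mul (hS f hfU).ne']
    exact mul_nonneg (share_nonneg f hfU) (sub_nonneg.mpr ((div_lt_iff₀' hb).mp lt_demand).le)

end Caching

open Caching in
theorem subsidy_maximized_at_cstar_neutral_general {A F K : Type*} [Field K] [LinearOrder K]
    [IsStrictOrderedRing K] {b s : K} {lam : A → F → K} {S : Finset A} {U C : Finset F} {r : A → K}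
    (hlam : ∀ a ∈ S, ∀ f ∈ U, 0 ≤ lam a f) (hb : 0 < b)
    (hS : ∀ f ∈ U, 0 < ∑ n ∈ S, lam n f) (hr : ∀ a ∈ S, 0 ≤ r a) (hC : C ⊆ U) :
    ∑ a ∈ S, r a * individualSaving b s lam S a C ≤
      ∑ a ∈ S, r a * individualSaving b s lam S a (optimalContents b s lam S U) :=
  Finset.sum_le_sum fun a ha => mul_le_mul_of_nonneg_left
    (individualSaving_le_optimalContents hb (hlam a ha) hS hC) (hr a ha)

/-- With shares `η_a(f) = λ_a(f) / ∑_{n∈S} λ_n(f)` and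
`Φ_a(C, S) = ∑_{f∈C} (b·λ_a(f) − s·η_a(f))`, for every choice of nonnegative subsidy
fractions `r`, the subsidy `sub(C, S) = ∑_{a∈S} r_a·Φ_a(C, S)` is maximized over all
`C ⊆ F` at `C = C*(S) = {f : ∑_{a∈S} λ_a(f) > s/b}`; in particular the maximizing set
is independent of `r` (neutrality). -/
theorem subsidy_maximized_at_cstar_neutral
    {A F : Type*} [Fintype A] [Fintype F]
    (lam : A → F → ℝ) (hlam : ∀ a f, 0 ≤ lam a f)
    (b s : ℝ) (hb : 0 < b) (hs : 0 < s)
    (S : Finset A) (hS : ∀ f : F, 0 < ∑ n ∈ S, lam n f)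
    (eta : A → F → ℝ) (heta : ∀ a f, eta a f = lam a f / ∑ n ∈ S, lam n f)
    (Phi : A → Finset F → ℝ)
    (hPhi : ∀ a C, Phi a C = ∑ f ∈ C, (b * lam a f - s * eta a f))
    (r : A → ℝ) (hr : ∀ a, 0 ≤ r a)
    (C : Finset F) :
    (∑ a ∈ S, r a * Phi a C) ≤
      ∑ a ∈ S, r a * Phi a (Finset.univ.filter (fun f => s / b < ∑ n ∈ S, lam n f)) := by
  obtain rfl : eta = Caching.demandShare lam S := funext₂ heta
  obtain rfl : Phi = Caching.individualSaving b s lam S := funext₂ hPhi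
  exact subsidy_maximized_at_cstar_neutral_general (fun a _ f _ => hlam a f) hb (fun f _ => hS f)
    (fun a _ => hr a) (Finset.subset_univ C)
end

section
/- Suppose ∑_{n∈A} λ_n(f) > 0 for every f ∈ F, and define η_a(f) = λ_a(f) / ∑_{n∈A} λ_n(f) and Φ_a(C, A) = ∑_{f∈C} (b·λ_a(f) − s·η_a(f)). Then the distribution {Φ_a(C*(A), A)}_{a∈A} lies in the core of the coalition game with value function v(S) = E(C*(S), S): for every coalition S ⊆ A, E(C*(S), S) ≤ ∑_{a∈S} Φ_a(C*(A), A). -/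
/-!
Since `λ_a(f) = η_a(f) · ∑_n λ_n(f)`, caching `f` brings agent `a` the fraction `η_a(f)` of the
saving `b · ∑_n λ_n(f) − s` that it brings the grand coalition. All agents therefore agree on which
contents are profitable, and `C*(A)` maximises the payoff of each of them separately. Moreover,
for any fixed `C`, the members of `S` pay only the part `∑_{a∈S} η_a(f) ≤ 1` of each storage cost,
so their payoffs from `C` already dominate the saving that `S` would obtain by caching `C` alone.
-/

open Finset

lemma sum_le_sum_of_nonpos_of_nonneg {ι M : Type*} [AddCommMonoid M] [PartialOrder M]
    [IsOrderedAddMonoid M] {g : ι → M} {s t : Finset ι} (hs : ∀ i ∈ s, i ∉ t → g i ≤ 0)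
    (ht : ∀ i ∈ t, i ∉ s → 0 ≤ g i) : ∑ i ∈ s, g i ≤ ∑ i ∈ t, g i := by
  classical
  calc ∑ i ∈ s, g i = ∑ i ∈ s ∩ t, g i + ∑ i ∈ s \ t, g i := (sum_inter_add_sum_sdiff s t g).symm
    _ ≤ ∑ i ∈ s ∩ t, g i :=
      add_le_of_nonpos_right (sum_nonpos fun i hi => hs i (mem_sdiff.1 hi).1 (mem_sdiff.1 hi).2)
    _ ≤ ∑ i ∈ t, g i :=
      sum_le_sum_of_subset_of_nonneg inter_subset_right fun i hi hi' =>
        ht i hi fun his => hi' (mem_inter.2 ⟨his, hi⟩)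

section CachingGame

variable {A F K : Type*} [Field K]

/-- The saving `E(C, S)` of the coalition `S` when it caches the contents `C`. -/
def cachingSaving (lam : A → F → K) (b s : K) (C : Finset F) (S : Finset A) : K :=
  ∑ f ∈ C, (b * ∑ a ∈ S, lam a f - s)

/-- The fraction `η_a(f)` of the demand of the coalition `T` for the content `f` that is due to
the agent `a`. It is `0` by convention when the total demand is `0`. -/
def demandShare (lam : A → F → K) (T : Finset A) (a : A) (f : F) : K :=
  lam a f / ∑ n ∈ T, lam n f

/-- The payoff `Φ_a(C, T)` of the agent `a` when `T` caches the contents `C` and splits the storage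
cost of each content in proportion to demand. -/
def proportionalPayoff (lam : A → F → K) (b s : K) (T : Finset A) (a : A) (C : Finset F) : K :=
  ∑ f ∈ C, (b * lam a f - s * demandShare lam T a f)

/-- `C` is the optimal content set `C*(T)`. This is a predicate rather than a `Finset`-valued
function so that the type of contents may be infinite. -/
def IsOptimalContentSet [LT K] (lam : A → F → K) (b s : K) (T : Finset A) (C : Finset F) : Prop :=
  ∀ f, f ∈ C ↔ s / b < ∑ a ∈ T, lam a f

lemma payoff_term_eq_demandShare_mul {lam : A → F → K} {T : Finset A} {f : F}
    (hT : ∑ n ∈ T, lam n f ≠ 0) (b s : K) (a : A) :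
    b * lam a f - s * demandShare lam T a f =
      demandShare lam T a f * (b * ∑ n ∈ T, lam n f - s) := by
  have h : demandShare lam T a f * ∑ n ∈ T, lam n f = lam a f := div_mul_cancel₀ _ hT
  linear_combination -b * h

lemma sum_proportionalPayoff (lam : A → F → K) (b s : K) (S T : Finset A) (C : Finset F) :
    ∑ a ∈ S, proportionalPayoff lam b s T a C =
      ∑ f ∈ C, (b * ∑ a ∈ S, lam a f - s * ∑ a ∈ S, demandShare lam T a f) := by
  simp only [proportionalPayoff, mul_sum, ← sum_sub_distrib]
  exact sum_comm

variable [LinearOrder K] [IsStrictOrderedRing K]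
  {lam : A → F → K} {b s : K} {S T : Finset A} {C Copt : Finset F} {a : A} {f : F}

lemma demandShare_nonneg (hlam : ∀ n ∈ T, 0 ≤ lam n f) (ha : a ∈ T) :
    0 ≤ demandShare lam T a f :=
  div_nonneg (hlam a ha) (sum_nonneg hlam)

lemma sum_demandShare_le_one (hlam : ∀ n ∈ T, 0 ≤ lam n f) (hST : S ⊆ T) :
    ∑ a ∈ S, demandShare lam T a f ≤ 1 := by
  simp only [demandShare, ← sum_div]
  exact div_le_one_of_le₀ (sum_le_sum_of_subset_of_nonneg hST fun n hn _ => hlam n hn)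
    (sum_nonneg hlam)

lemma cachingSaving_le_sum_proportionalPayoff (hlam : ∀ n ∈ T, ∀ f, 0 ≤ lam n f) (hs : 0 ≤ s)
    (hST : S ⊆ T) (C : Finset F) :
    cachingSaving lam b s C S ≤ ∑ a ∈ S, proportionalPayoff lam b s T a C := by
  rw [sum_proportionalPayoff]
  refine sum_le_sum fun f _ => sub_le_sub_left ?_ _
  exact mul_le_of_le_one_right hs (sum_demandShare_le_one (fun n hn => hlam n hn f) hST)

lemma IsOptimalContentSet.proportionalPayoff_le (hopt : IsOptimalContentSet lam b s T Copt)
    (hlam : ∀ n ∈ T, ∀ f, 0 ≤ lam n f) (hb : 0 < b) (hT : ∀ f, ∑ n ∈ T, lam n f ≠ 0)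
    (ha : a ∈ T) (C : Finset F) :
    proportionalPayoff lam b s T a C ≤ proportionalPayoff lam b s T a Copt := by
  have hshare (f : F) : 0 ≤ demandShare lam T a f := demandShare_nonneg (hlam · · f) ha
  have hmem (f : F) : f ∈ Copt ↔ 0 < b * ∑ n ∈ T, lam n f - s := by
    rw [hopt f, div_lt_iff₀' hb, sub_pos]
  simp only [proportionalPayoff, payoff_term_eq_demandShare_mul (hT _)]
  refine sum_le_sum_of_nonpos_of_nonneg (fun f _ hf => ?_) fun f hf _ => ?_
  · exact mul_nonpos_of_nonneg_of_nonpos (hshare f) (not_lt.1 (mt (hmem f).2 hf))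
  · exact mul_nonneg (hshare f) ((hmem f).1 hf).le

theorem distribution_in_core_general (hlam : ∀ n ∈ T, ∀ f, 0 ≤ lam n f) (hb : 0 < b) (hs : 0 ≤ s)
    (hT : ∀ f, 0 < ∑ n ∈ T, lam n f) (hopt : IsOptimalContentSet lam b s T Copt)
    (hST : S ⊆ T) (C : Finset F) :
    cachingSaving lam b s C S ≤ ∑ a ∈ S, proportionalPayoff lam b s T a Copt :=
  (cachingSaving_le_sum_proportionalPayoff hlam hs hST C).trans <|
    sum_le_sum fun _ ha => hopt.proportionalPayoff_le hlam hb (fun f => (hT f).ne') (hST ha) C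

end CachingGame

/-- With `η_a(f) = λ_a(f) / ∑_{n∈A} λ_n(f)` and
`Φ_a(C, A) = ∑_{f∈C} (b·λ_a(f) − s·η_a(f))`, the distribution `{Φ_a(C*(A), A)}` lies in
the core of the game `v(S) = E(C*(S), S)`: every coalition `S ⊆ A` satisfies
`E(C*(S), S) ≤ ∑_{a∈S} Φ_a(C*(A), A)`. -/
theorem distribution_in_core
    {A F : Type*} [Fintype A] [Fintype F]
    (lam : A → F → ℝ) (hlam : ∀ a f, 0 ≤ lam a f)
    (b s : ℝ) (hb : 0 < b) (hs : 0 < s)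
    (hA : ∀ f : F, 0 < ∑ n : A, lam n f)
    (eta : A → F → ℝ) (heta : ∀ a f, eta a f = lam a f / ∑ n : A, lam n f)
    (Phi : A → Finset F → ℝ)
    (hPhi : ∀ a C, Phi a C = ∑ f ∈ C, (b * lam a f - s * eta a f))
    (Cstar : Finset A → Finset F)
    (hCstar : ∀ S : Finset A,
      Cstar S = Finset.univ.filter (fun f => s / b < ∑ a ∈ S, lam a f))
    (S : Finset A) :
    (∑ f ∈ Cstar S, (b * ∑ a ∈ S, lam a f - s)) ≤
      ∑ a ∈ S, Phi a (Cstar Finset.univ) := by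
  simp only [hPhi, heta]
  exact distribution_in_core_general (fun n _ => hlam n) hb hs.le hA
    (fun f => by simp [hCstar]) (subset_univ S) (Cstar S)
end

section
/- Let 0 < α < 1, F > 0, T > 0, fanouts e₁, e₂ ≥ 1, storage costs s⁽¹⁾, s⁽²⁾, s⁽³⁾ > 0 with e₁·s⁽¹⁾ > s⁽²⁾ and e₂·s⁽²⁾ > s⁽³⁾, and bandwidth costs b⁽¹⁾, b⁽²⁾, b⁽³⁾ > 0. Define D₁ = F·min{1, ((1−α)·T·b⁽¹⁾ / (F·e₂·(e₁·s⁽¹⁾ − s⁽²⁾)))^{1/α}}, D₂ = F·min{1, ((1−α)·T·b⁽²⁾ / (F·(e₂·s⁽²⁾ − s⁽³⁾)))^{1/α}}, and D₃ = F·min{1, ((1−α)·T·b⁽³⁾ / (F·s⁽³⁾))^{1/α}}, and suppose D₁ ≤ D₂ ≤ D₃. Then the cost function cost(C₁, C₂, C₃) = e₁·e₂·C₁·s⁽¹⁾ + e₂·C₂·s⁽²⁾ + C₃·s⁽³⁾ + T·[(1 − h(C₁))·b⁽¹⁾ + (1 − h(C₁+C₂))·b⁽²⁾ + (1 − h(C₁+C₂+C₃))·b⁽³⁾],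 with h(x) = (x/F)^{1−α}, attains its global minimum over the feasible set {C₁, C₂, C₃ ≥ 0, C₁+C₂+C₃ ≤ F} at (C₁, C₂, C₃) = (D₁, D₂ − D₁, D₃ − D₂); equivalently, the optimal cumulative cache sizes are C₁ = D₁, C₁+C₂ = D₂ and C₁+C₂+C₃ = D₃. -/
/-!
In the cumulative sizes `X₁ = C₁`, `X₂ = C₁ + C₂`, `X₃ = C₁ + C₂ + C₃` the network cost separates
into three one-variable problems: a byte added to `Xᵢ` moves storage from tier `i + 1` to tier `i`
and so costs the difference of the two storage prices per byte, summed over the nodes of each tier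
(at the root, the full price). With `u = X / F`, each problem amounts to minimizing
`(1 - α) u - r u ^ (1 - α)` on `[0, 1]`. When `r = d ^ α`, weighted AM-GM
`u ^ (1 - α) d ^ α ≤ (1 - α) u + α d`, an equality at `u = d`, shows that `d` is the minimizer;
when `r ≥ 1`, increasing `r` beyond `1` only rewards larger `u`, so the minimizer stays at `1`.
-/

open Set

section Normalized

variable {α : ℝ}

lemma isMinOn_one_sub_mul_sub_rpow_mul_rpow {d : ℝ} (hα0 : 0 ≤ α) (hα1 : α ≤ 1) (hd : 0 ≤ d) :
    IsMinOn (fun u : ℝ ↦ (1 - α) * u - d ^ α * u ^ (1 - α)) (Ici 0) d := by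
  refine isMinOn_iff.2 fun u hu ↦ ?_
  have amgm : u ^ (1 - α) * d ^ α ≤ (1 - α) * u + α * d :=
    Real.geom_mean_le_arith_mean2_weighted (sub_nonneg.2 hα1) hα0 hu hd (sub_add_cancel 1 α)
  have amgm_eq : d ^ α * d ^ (1 - α) = d := by
    rw [← Real.rpow_add' hd (by simp), add_sub_cancel, Real.rpow_one]
  linarith

lemma isMinOn_one_sub_mul_sub_mul_rpow {r : ℝ} (hα0 : 0 < α) (hα1 : α ≤ 1) (hr : 0 ≤ r) :
    IsMinOn (fun u : ℝ ↦ (1 - α) * u - r * u ^ (1 - α)) (Icc 0 1) (min 1 (r ^ (1 / α))) := by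
  rcases le_total r 1 with hr1 | hr1
  · have hd : r ^ (1 / α) ≤ 1 := Real.rpow_le_one hr hr1 (by positivity)
    have hdα : (r ^ (1 / α)) ^ α = r := by rw [one_div, Real.rpow_inv_rpow hr hα0.ne']
    have hmin := isMinOn_one_sub_mul_sub_rpow_mul_rpow hα0.le hα1 (Real.rpow_nonneg hr (1 / α))
    rw [hdα] at hmin
    rw [min_eq_right hd]
    exact hmin.on_subset Icc_subset_Ici_self
  · rw [min_eq_left (Real.one_le_rpow hr1 (by positivity))]
    refine isMinOn_iff.2 fun u hu ↦ ?_
    have hunit : (1 - α) * 1 - 1 ≤ (1 - α) * u - u ^ (1 - α) := by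
      simpa using isMinOn_one_sub_mul_sub_rpow_mul_rpow hα0.le hα1 zero_le_one hu.1
    have hexcess : (r - 1) * u ^ (1 - α) ≤ r - 1 :=
      mul_le_of_le_one_right (sub_nonneg.2 hr1)
        (Real.rpow_le_one hu.1 hu.2 (sub_nonneg.2 hα1))
    rw [Real.one_rpow]
    linarith

end Normalized

/-- The cost attributed to one tier as a function of the cumulative cache size `x` up to that tier:
storage at the marginal price `k` per byte, plus bandwidth at price `B` (total demand included) for
the misses. The hit probability is the Zipf approximation `(x / F) ^ (1 - α)`. -/
noncomputable def tierCost (α F k B x : ℝ) : ℝ :=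
  k * x + B * (1 - (x / F) ^ (1 - α))

/-- The cumulative cache size minimizing `tierCost α F k B`: the stationary point of the cost,
capped at the catalogue volume `F`. -/
noncomputable def tierOptimum (α F k B : ℝ) : ℝ :=
  F * min 1 (((1 - α) * B / (F * k)) ^ (1 / α))

section Tier

variable {α F k B : ℝ}

lemma tierCost_mul_left (hα : α ≠ 1) (hF : F ≠ 0) (hk : k ≠ 0) (u : ℝ) :
    tierCost α F k B (F * u) =
      F * k / (1 - α) * ((1 - α) * u - (1 - α) * B / (F * k) * u ^ (1 - α)) + B := by
  have hα' : 1 - α ≠ 0 := sub_ne_zero.2 hα.symm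
  rw [tierCost, mul_div_cancel_left₀ u hF]
  field_simp
  ring

lemma isMinOn_tierCost_tierOptimum (hα0 : 0 < α) (hα1 : α < 1) (hF : 0 < F) (hk : 0 < k)
    (hB : 0 ≤ B) : IsMinOn (tierCost α F k B) (Icc 0 F) (tierOptimum α F k B) := by
  refine isMinOn_iff.2 fun x hx ↦ ?_
  have hα : 0 ≤ 1 - α := sub_nonneg.2 hα1.le
  have hscale : 0 ≤ F * k / (1 - α) := div_nonneg (mul_pos hF hk).le hα
  have hu : x / F ∈ Icc (0 : ℝ) 1 := ⟨div_nonneg hx.1 hF.le, div_le_one_of_le₀ hx.2 hF.le⟩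
  have hr : 0 ≤ (1 - α) * B / (F * k) := div_nonneg (mul_nonneg hα hB) (mul_pos hF hk).le
  have hmin := isMinOn_iff.1 (isMinOn_one_sub_mul_sub_mul_rpow hα0 hα1.le hr) (x / F) hu
  rw [← mul_div_cancel₀ x hF.ne', tierOptimum,
    tierCost_mul_left hα1.ne hF.ne' hk.ne', tierCost_mul_left hα1.ne hF.ne' hk.ne']
  exact add_le_add_left (mul_le_mul_of_nonneg_left hmin hscale) B

end Tier

/-- The relaxation of the problem in which an individual cache size may be negative. -/
theorem three_tier_optimal_cache_sizes_general
    (α F T e₁ e₂ s₁ s₂ s₃ b₁ b₂ b₃ : ℝ)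
    (hα0 : 0 < α) (hα1 : α < 1) (hF : 0 < F) (hT : 0 ≤ T) (he₂ : 0 < e₂) (hs₃ : 0 < s₃)
    (hs12 : s₂ < e₁ * s₁) (hs23 : s₃ < e₂ * s₂)
    (hb₁ : 0 ≤ b₁) (hb₂ : 0 ≤ b₂) (hb₃ : 0 ≤ b₃)
    (h : ℝ → ℝ) (hh : ∀ x : ℝ, h x = (x / F) ^ (1 - α))
    (cost : ℝ → ℝ → ℝ → ℝ)
    (hcost : ∀ C₁ C₂ C₃ : ℝ,
      cost C₁ C₂ C₃ =
        e₁ * e₂ * C₁ * s₁ + e₂ * C₂ * s₂ + C₃ * s₃ +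
          T * ((1 - h C₁) * b₁ + (1 - h (C₁ + C₂)) * b₂ +
                (1 - h (C₁ + C₂ + C₃)) * b₃))
    (D₁ D₂ D₃ : ℝ)
    (hD₁ : D₁ = F * min 1 (((1 - α) * T * b₁ / (F * e₂ * (e₁ * s₁ - s₂))) ^ (1 / α)))
    (hD₂ : D₂ = F * min 1 (((1 - α) * T * b₂ / (F * (e₂ * s₂ - s₃))) ^ (1 / α)))
    (hD₃ : D₃ = F * min 1 (((1 - α) * T * b₃ / (F * s₃)) ^ (1 / α)))
    (C₁ C₂ C₃ : ℝ) (hC₁ : C₁ ∈ Icc 0 F) (hC₂ : C₁ + C₂ ∈ Icc 0 F)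
    (hC₃ : C₁ + C₂ + C₃ ∈ Icc 0 F) :
    cost D₁ (D₂ - D₁) (D₃ - D₂) ≤ cost C₁ C₂ C₃ := by
  have cost_eq (x y z : ℝ) : cost x y z =
      tierCost α F (e₂ * (e₁ * s₁ - s₂)) (T * b₁) x +
        tierCost α F (e₂ * s₂ - s₃) (T * b₂) (x + y) + tierCost α F s₃ (T * b₃) (x + y + z) := by
    simp only [hcost, hh, tierCost]
    ring
  have hD₁' : D₁ = tierOptimum α F (e₂ * (e₁ * s₁ - s₂)) (T * b₁) := by
    simp only [hD₁, tierOptimum, mul_assoc]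
  have hD₂' : D₂ = tierOptimum α F (e₂ * s₂ - s₃) (T * b₂) := by
    simp only [hD₂, tierOptimum, mul_assoc]
  have hD₃' : D₃ = tierOptimum α F s₃ (T * b₃) := by
    simp only [hD₃, tierOptimum, mul_assoc]
  rw [cost_eq, cost_eq, add_sub_cancel, add_sub_cancel, hD₁', hD₂', hD₃']
  exact add_le_add_three
    (isMinOn_tierCost_tierOptimum hα0 hα1 hF (mul_pos he₂ (sub_pos.2 hs12)) (mul_nonneg hT hb₁) hC₁)
    (isMinOn_tierCost_tierOptimum hα0 hα1 hF (sub_pos.2 hs23) (mul_nonneg hT hb₂) hC₂)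
    (isMinOn_tierCost_tierOptimum hα0 hα1 hF hs₃ (mul_nonneg hT hb₃) hC₃)

/-- In the symmetric three-tier tree, with cumulative targets
`D₁, D₂, D₃` given by the closed-form expressions and satisfying `D₁ ≤ D₂ ≤ D₃`,
the network cost
`cost(C₁, C₂, C₃) = e₁e₂C₁s⁽¹⁾ + e₂C₂s⁽²⁾ + C₃s⁽³⁾
  + T[(1−h(C₁))b⁽¹⁾ + (1−h(C₁+C₂))b⁽²⁾ + (1−h(C₁+C₂+C₃))b⁽³⁾]`,
with `h(x) = (x/F)^{1−α}`, attains its global minimum over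
`{C₁, C₂, C₃ ≥ 0, C₁+C₂+C₃ ≤ F}` at `(C₁, C₂, C₃) = (D₁, D₂ − D₁, D₃ − D₂)`. -/
theorem three_tier_optimal_cache_sizes
    (α F T e₁ e₂ s₁ s₂ s₃ b₁ b₂ b₃ : ℝ)
    (hα0 : 0 < α) (hα1 : α < 1) (hF : 0 < F) (hT : 0 < T)
    (he₁ : 1 ≤ e₁) (he₂ : 1 ≤ e₂)
    (hs₁ : 0 < s₁) (hs₂ : 0 < s₂) (hs₃ : 0 < s₃)
    (hs12 : s₂ < e₁ * s₁) (hs23 : s₃ < e₂ * s₂)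
    (hb₁ : 0 < b₁) (hb₂ : 0 < b₂) (hb₃ : 0 < b₃)
    (h : ℝ → ℝ) (hh : ∀ x : ℝ, h x = (x / F) ^ (1 - α))
    (cost : ℝ → ℝ → ℝ → ℝ)
    (hcost : ∀ C₁ C₂ C₃ : ℝ,
      cost C₁ C₂ C₃ =
        e₁ * e₂ * C₁ * s₁ + e₂ * C₂ * s₂ + C₃ * s₃ +
          T * ((1 - h C₁) * b₁ + (1 - h (C₁ + C₂)) * b₂ +
                (1 - h (C₁ + C₂ + C₃)) * b₃))
    (D₁ D₂ D₃ : ℝ)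
    (hD₁ : D₁ = F * min 1 (((1 - α) * T * b₁ / (F * e₂ * (e₁ * s₁ - s₂))) ^ (1 / α)))
    (hD₂ : D₂ = F * min 1 (((1 - α) * T * b₂ / (F * (e₂ * s₂ - s₃))) ^ (1 / α)))
    (hD₃ : D₃ = F * min 1 (((1 - α) * T * b₃ / (F * s₃)) ^ (1 / α)))
    (hD12 : D₁ ≤ D₂) (hD23 : D₂ ≤ D₃) :
    ∀ C₁ C₂ C₃ : ℝ, 0 ≤ C₁ → 0 ≤ C₂ → 0 ≤ C₃ → C₁ + C₂ + C₃ ≤ F →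
      cost D₁ (D₂ - D₁) (D₃ - D₂) ≤ cost C₁ C₂ C₃ := by
  intro C₁ C₂ C₃ hC₁ hC₂ hC₃ hCF
  exact three_tier_optimal_cache_sizes_general α F T e₁ e₂ s₁ s₂ s₃ b₁ b₂ b₃ hα0 hα1 hF hT.le
    (by linarith) hs₃ hs12 hs23 hb₁.le hb₂.le hb₃.le h hh cost hcost D₁ D₂ D₃ hD₁ hD₂ hD₃ C₁ C₂ C₃
    ⟨hC₁, by linarith⟩ ⟨by linarith, by linarith⟩ ⟨by linarith, hCF⟩
end
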